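/- arXiv:1704.05381 — 2 statements merged into one kernel-verified Lean document; each statement's English description precedes it below -/
import Mathlib

section
/- Fix m with 3/2 < m < 2 and β with 0 < β < m − 3/2. There exist constants C < ∞ and ε₀ > 0 such that for every z ∈ bD_m and every 0 < ε < ε₀: ∫_{bD_m} |Re w₁|^{2m−4} · |w−z|² · | Δ(w, z+εN(z))^{−2} − Δ(w,z)^{−2} | dH³(w) ≤ C·ε^β. -/
open MeasureTheory Complex
open scoped ENNReal

noncomputable section

/-- `ℂ²` with the Euclidean metric. -/
abbrev C2 := EuclideanSpace ℂ (Fin 2)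

instance : MeasurableSpace C2 := borel _
instance : BorelSpace C2 := ⟨rfl⟩

/-- The defining function `ρ(w) = |w₂|² + |Re w₁|^m + (Im w₁)² − 1`. -/
def rhom (m : ℝ) (w : C2) : ℝ := ‖w 1‖ ^ 2 + |(w 0).re| ^ m + (w 0).im ^ 2 - 1

/-- The domain `D_m = {ρ < 0}`. -/
def Dm (m : ℝ) : Set C2 := {w | rhom m w < 0}

/-- The boundary `bD_m = {ρ = 0}`. -/
def bDm (m : ℝ) : Set C2 := {w | rhom m w = 0}

/-- The Cauchy–Leray denominator
`Δ(w,z) = ((m/2)|u₁|^{m−1}·sgn(u₁) − i v₁)(w₁−z₁) + conj(w₂)(w₂−z₂)`. -/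
def Deltam (m : ℝ) (w z : C2) : ℂ :=
  ((m / 2 * |(w 0).re| ^ (m - 1) * Real.sign (w 0).re : ℝ) - I * ((w 0).im : ℂ))
      * (w 0 - z 0)
    + (starRingEnd ℂ) (w 1) * (w 1 - z 1)

/-- The real gradient `∇ρ` on `ℝ⁴ ≅ ℂ²`, written as a vector in `ℂ²`:
`∇ρ(w) = (m|u₁|^{m−1} sgn(u₁) + 2i v₁, 2w₂)`. -/
def gradRhom (m : ℝ) (w : C2) : C2 :=
  (WithLp.equiv 2 (Fin 2 → ℂ)).symm
    ![(m * |(w 0).re| ^ (m - 1) * Real.sign (w 0).re : ℝ)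
        + (2 * (w 0).im : ℝ) * I, 2 * w 1]

/-- The inward unit normal `N(z) = −∇ρ(z)/|∇ρ(z)|`. -/
def Nm (m : ℝ) (z : C2) : C2 := (-‖gradRhom m z‖⁻¹ : ℝ) • gradRhom m z



theorem lint_pi {n : ℕ} (f : Fin n → ℝ → ℝ≥0∞) (hf : ∀ i, Measurable (f i)) :
    ∫⁻ x : Fin n → ℝ, ∏ i, f i (x i) = ∏ i, ∫⁻ t, f i t := by
  induction n with
  | zero => simp [volume_pi]
  | succ n ih =>
    have h := (volume_preserving_piFinSuccAbove (fun _ : Fin (n+1) => ℝ) 0).symm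
    rw [← h.lintegral_comp_emb (MeasurableEquiv.measurableEmbedding _)]
    simp only [Fin.prod_univ_succ, MeasurableEquiv.piFinSuccAbove_symm_apply, Fin.insertNthEquiv,
      Fin.zero_succAbove, Equiv.coe_fn_mk, Fin.insertNth_zero', Fin.cons_zero, Fin.cons_succ]
    rw [← ih (fun i => f i.succ) (fun i => hf _), Measure.volume_eq_prod]
    exact lintegral_prod_mul (μ := (volume : Measure ℝ)) (ν := (volume : Measure (Fin n → ℝ))) (f := f 0) (g := fun y : Fin n → ℝ => ∏ i, f i.succ (y i)) (hf 0).aemeasurable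
      (Finset.measurable_prod _ (fun i _ => (hf i.succ).comp (measurable_pi_apply i))).aemeasurable

/-- one-dimensional singular kernel -/
noncomputable def kern (γ c : ℝ) (t : ℝ) : ℝ≥0∞ := (ENNReal.ofReal |t - c|) ^ (-γ)

theorem kern_meas (γ c : ℝ) : Measurable (kern γ c) := by
  unfold kern
  fun_prop

theorem kern0_fin (γ : ℝ) (h1 : γ < 1) :
    ∫⁻ t in Set.Icc (-2:ℝ) 2, kern γ 0 t < ∞ := by
  have h2 : ∫⁻ t in Set.Ioc (0:ℝ) 2, kern γ 0 t < ∞ := by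
    have := (intervalIntegral.intervalIntegrable_rpow' (a := 0) (b := 2) (r := -γ) (by linarith)).1
    refine lt_of_le_of_lt ?_ this.lintegral_lt_top
    refine setLIntegral_mono' measurableSet_Ioc fun t ht => ?_
    unfold kern
    rw [sub_zero, abs_of_pos ht.1, ENNReal.ofReal_rpow_of_pos ht.1]
  have h3 : ∫⁻ t in Set.Ico (-2:ℝ) 0, kern γ 0 t < ∞ := by
    have e := (Measure.measurePreserving_neg (volume : Measure ℝ)).setLIntegral_comp_preimage
      (s := Set.Ioc (0:ℝ) 2) measurableSet_Ioc (kern_meas γ 0)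
    rw [← e] at h2
    refine lt_of_le_of_lt (le_of_eq ?_) h2
    have : (Neg.neg ⁻¹' Set.Ioc (0:ℝ) 2) = Set.Ico (-2:ℝ) 0 := by
      simp
    rw [this]
    simp [kern]
  have h4 : Set.Icc (-2:ℝ) 2 ⊆ (Set.Ioc (0:ℝ) 2 ∪ Set.Ico (-2:ℝ) 0) ∪ {0} := by
    intro t ht
    rcases lt_trichotomy t 0 with h | h | h
    · left; right; exact ⟨ht.1, h⟩
    · right; exact h
    · left; left; exact ⟨h, ht.2⟩
  refine lt_of_le_of_lt (lintegral_mono_set h4) ?_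
  refine lt_of_le_of_lt (lintegral_union_le _ _ _) ?_
  refine ENNReal.add_lt_top.2 ⟨?_, by simp⟩
  refine lt_of_le_of_lt (lintegral_union_le _ _ _) ?_
  exact ENNReal.add_lt_top.2 ⟨h2, h3⟩

theorem kern_le (γ c : ℝ) (hc : |c| ≤ 1) :
    ∫⁻ t in Set.Icc (-1:ℝ) 1, kern γ c t ≤ ∫⁻ t in Set.Icc (-2:ℝ) 2, kern γ 0 t := by
  have e := (measurePreserving_sub_right (volume : Measure ℝ) c).setLIntegral_comp_preimage
      (s := Set.Icc (-2:ℝ) 2) measurableSet_Icc (kern_meas γ 0)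
  rw [← e]
  have : ∀ t, kern γ 0 (t - c) = kern γ c t := by intro t; simp [kern]
  simp only [this]
  refine lintegral_mono_set ?_
  intro t ht
  have := abs_le.1 hc
  simp only [Set.mem_preimage, Set.mem_Icc] at *
  constructor <;> linarith

theorem map_le_of_anti {X : Type*} [MetricSpace X] [MeasurableSpace X] [BorelSpace X]
    (E : Set X) (F : X → Fin 3 → ℝ) (hF : Measurable F) (K : NNReal)
    (hK : ∀ x ∈ E, ∀ y ∈ E, dist x y ≤ K * dist (F x) (F y)) (G : (Fin 3 → ℝ) → ℝ≥0∞)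
    (hG : Measurable G) :
    ∫⁻ x in E, G (F x) ∂μH[3] ≤ (K : ℝ≥0∞) ^ (3:ℝ) * ∫⁻ t, G t := by
  classical
  rcases E.eq_empty_or_nonempty with rfl | ⟨x0, hx0⟩
  · simp
  have : Nonempty X := ⟨x0⟩
  have hinj : Set.InjOn F E := by
    intro x hx y hy h
    have := hK x hx y hy
    rw [h, dist_self, mul_zero] at this
    exact dist_le_zero.1 this
  set g := Function.invFunOn F E with hg
  have hgF : ∀ x ∈ E, g (F x) = x := fun x hx => hinj.leftInvOn_invFunOn hx
  have hgL : LipschitzOnWith K g (F '' E) := by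
    refine LipschitzOnWith.of_dist_le_mul ?_
    rintro _ ⟨x, hx, rfl⟩ _ ⟨y, hy, rfl⟩
    rw [hgF x hx, hgF y hy]
    exact hK x hx y hy
  have hvol : (μH[3] : Measure (Fin 3 → ℝ)) = volume := by
    have := @hausdorffMeasure_pi_real (Fin 3) _
    simpa using this
  have hle : (μH[3].restrict E).map F ≤ ((K : ℝ≥0∞) ^ (3:ℝ)) • (volume : Measure (Fin 3 → ℝ)) := by
    refine Measure.le_iff.2 fun A hA => ?_
    rw [Measure.map_apply hF hA, Measure.restrict_apply (hF hA)]
    have hs : F ⁻¹' A ∩ E ⊆ g '' (F '' E ∩ A) := by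
      rintro x ⟨hxA, hx⟩
      exact ⟨F x, ⟨⟨x, hx, rfl⟩, hxA⟩, hgF x hx⟩
    refine (measure_mono hs).trans ?_
    refine ((hgL.mono Set.inter_subset_left).hausdorffMeasure_image_le (by norm_num)).trans ?_
    rw [hvol, Measure.smul_apply, smul_eq_mul]
    gcongr
    exact Set.inter_subset_right
  rw [← lintegral_map hG hF]
  refine (lintegral_mono' hle le_rfl).trans ?_
  rw [lintegral_smul_measure, smul_eq_mul]


theorem gmono_pos (p : ℝ) (h1 : 1/2 < p) (h2 : p < 1) (x y : ℝ) (hx : 0 ≤ x) (hxy : x ≤ y)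
    (hy : y ≤ 1) : p * (y - x) ≤ y ^ p - x ^ p := by
  rcases (hx.trans hxy).eq_or_lt with h0 | h0
  · have : x = 0 := by linarith
    subst this; subst h0; simp
  have hb := rpow_one_add_le_one_add_mul_self (s := x / y - 1) (p := p)
    (by have : 0 ≤ x / y := by positivity
        linarith) (by linarith) (by linarith)
  rw [add_sub_cancel, Real.div_rpow hx h0.le, div_le_iff₀ (by positivity)] at hb
  have hyp : y ≤ y ^ p := by
    conv_lhs => rw [← Real.rpow_one y]
    exact Real.rpow_le_rpow_of_exponent_ge h0 hy h2.le
  have hq : 1 ≤ y ^ p / y := (one_le_div h0).2 hyp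
  have e : (1 + p * (x / y - 1)) * y ^ p = y ^ p - p * (y - x) * (y ^ p / y) := by
    field_simp; ring
  rw [e] at hb
  nlinarith [mul_nonneg (mul_nonneg (by linarith : (0:ℝ) ≤ p) (sub_nonneg.2 hxy)) (sub_nonneg.2 hq)]

/-- the function `|x|^p sgn x` -/
noncomputable def gs (p x : ℝ) : ℝ := |x| ^ p * Real.sign x

theorem gs_neg (p x : ℝ) : gs p (-x) = - gs p x := by
  unfold gs; rw [abs_neg, Real.sign_neg]; ring

theorem gs_nn (p x : ℝ) (hp : 1/2 < p) (hx : 0 ≤ x) : gs p x = x ^ p := by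
  unfold gs
  rcases hx.eq_or_lt with rfl | h
  · simp; rw [Real.zero_rpow (by linarith)]
  · rw [abs_of_pos h, Real.sign_of_pos h, mul_one]

theorem gmono (p : ℝ) (h1 : 1/2 < p) (h2 : p < 1) (x y : ℝ) (hx : -1 ≤ x) (hxy : x ≤ y)
    (hy : y ≤ 1) : p * (y - x) ≤ gs p y - gs p x := by
  rcases le_total 0 x with h | h
  · rw [gs_nn p x h1 h, gs_nn p y h1 (h.trans hxy)]
    exact gmono_pos p h1 h2 x y h hxy hy
  have ex : gs p x = - (-x) ^ p := by
    rw [← gs_nn p (-x) h1 (by linarith), gs_neg]; ring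
  rcases le_total 0 y with h' | h'
  · rw [ex, gs_nn p y h1 h']
    have a := gmono_pos p h1 h2 0 y le_rfl h' hy
    have b := gmono_pos p h1 h2 0 (-x) le_rfl (by linarith) (by linarith)
    rw [Real.zero_rpow (by linarith)] at a b
    linarith
  · have ey : gs p y = - (-y) ^ p := by
      rw [← gs_nn p (-y) h1 (by linarith), gs_neg]; ring
    rw [ex, ey]
    have b := gmono_pos p h1 h2 (-y) (-x) (by linarith) (by linarith) (by linarith)
    linarith

theorem gs_deriv (m x : ℝ) (h1 : 3/2 < m) :
    HasDerivAt (fun x : ℝ => |x| ^ m) (m * gs (m-1) x) x := by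
  have := hasDerivAt_abs_rpow x (p := m) (by linarith)
  convert this using 1
  rw [mul_assoc]; congr 1
  unfold gs
  rcases eq_or_ne x 0 with rfl | h
  · simp
  · have hs : x = |x| * Real.sign x := by
      rcases lt_or_gt_of_ne h with h | h
      · rw [abs_of_neg h, Real.sign_of_neg h]; ring
      · rw [abs_of_pos h, Real.sign_of_pos h]; ring
    conv_rhs => rw [hs]
    rw [abs_mul, abs_abs]
    have : |Real.sign x| = 1 := by
      rcases lt_or_gt_of_ne h with h | h
      · rw [Real.sign_of_neg h]; simp
      · rw [Real.sign_of_pos h]; simp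
    rw [this, mul_one, ← mul_assoc]
    congr 1
    rw [← Real.rpow_add_one (abs_pos.2 h).ne']
    congr 1; ring

theorem strongconv (m u u' : ℝ) (h1 : 3/2 < m) (h2 : m < 2) (hu : |u| ≤ 1) (hu' : |u'| ≤ 1) :
    |u| ^ m + m * gs (m-1) u * (u' - u) + 1/4 * (u' - u) ^ 2 ≤ |u'| ^ m := by
  have hd : ∀ x, HasDerivAt (fun x : ℝ => |x| ^ m - 1/4 * x ^ 2) (m * gs (m-1) x - 1/4 * (2 * x)) x := by
    intro x
    have := ((hasDerivAt_pow 2 x).const_mul (1/4))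
    have := (gs_deriv m x h1).sub this
    exact this.congr_deriv (by simp)
  have hc : ConvexOn ℝ (Set.Icc (-1:ℝ) 1) (fun x : ℝ => |x| ^ m - 1/4 * x ^ 2) := by
    refine MonotoneOn.convexOn_of_deriv (convex_Icc _ _)
      (fun x _ => (hd x).continuousAt.continuousWithinAt)
      (fun x _ => (hd x).differentiableAt.differentiableWithinAt) ?_
    intro x hx y hy hxy
    rw [interior_Icc] at hx hy
    rw [(hd x).deriv, (hd y).deriv]
    have := gmono (m-1) (by linarith) (by linarith) x y hx.1.le hxy hy.2.le
    nlinarith [sub_nonneg.2 hxy, mul_nonneg (sub_nonneg.2 hxy) (by nlinarith : 0 ≤ m * (m-1) - 1/2)]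
  rcases lt_trichotomy u u' with h | h | h
  · have := hc.le_slope_of_hasDerivAt (abs_le.1 hu) (abs_le.1 hu') h (hd u)
    rw [slope_def_field, le_div_iff₀ (by linarith)] at this
    nlinarith
  · subst h; simp
  · have := hc.slope_le_of_hasDerivAt (abs_le.1 hu') (abs_le.1 hu) h (hd u)
    rw [slope_def_field, div_le_iff₀ (by linarith)] at this
    nlinarith

theorem absrpow_lip (m u u' : ℝ) (h1 : 3/2 < m) (h2 : m < 2) (hu : |u| ≤ 1) (hu' : |u'| ≤ 1) :
    |(|u| ^ m - |u'| ^ m)| ≤ 2 * |u - u'| := by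
  have key : ∀ a b : ℝ, |a| ≤ 1 → |b| ≤ 1 → |a| ^ m - |b| ^ m ≤ 2 * |a - b| := by
    intro a b ha hb
    have := strongconv m a b h1 h2 ha hb
    have hg : |gs (m-1) a| ≤ 1 := by
      unfold gs
      rw [abs_mul, abs_of_nonneg (by positivity)]
      have := Real.rpow_le_one (abs_nonneg a) ha (by linarith : 0 ≤ m - 1)
      have h3 : |Real.sign a| ≤ 1 := by
        rcases Real.sign_apply_eq a with h | h | h <;> simp [h]
      exact mul_le_one₀ this (abs_nonneg _) h3
    have h4 : m * gs (m-1) a * (a - b) ≤ 2 * |a - b| := by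
      refine (le_abs_self _).trans ?_
      rw [abs_mul, abs_mul, abs_of_pos (by linarith : 0 < m)]
      gcongr
      nlinarith [abs_nonneg (gs (m-1) a)]
    nlinarith [sq_nonneg (b - a)]
  rw [abs_le]
  constructor
  · have := key u' u hu' hu
    rw [abs_sub_comm] at this; linarith
  · exact key u u' hu hu'

theorem absrpow_anti (m u u' : ℝ) (h1 : 3/2 < m) (h2 : m < 2) (hu : |u| ≤ 1) (hu' : |u'| ≤ 1)
    (h3 : 1/4 ≤ u) (h4 : 1/4 ≤ u') :
    1/4 * |u - u'| ≤ |(|u| ^ m - |u'| ^ m)| := by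
  have key : ∀ a b : ℝ, |a| ≤ 1 → |b| ≤ 1 → 1/4 ≤ a → a ≤ b →
      1/4 * (b - a) ≤ |b| ^ m - |a| ^ m := by
    intro a b ha hb h5 h6
    have := strongconv m a b h1 h2 ha hb
    have hg : 1/4 ≤ gs (m-1) a := by
      rw [gs_nn _ _ (by linarith) (by linarith)]
      refine h5.trans ?_
      conv_lhs => rw [← Real.rpow_one a]
      exact Real.rpow_le_rpow_of_exponent_ge (by linarith) (abs_le.1 ha).2 (by linarith)
    nlinarith [sq_nonneg (b - a), mul_nonneg (sub_nonneg.2 h6) (by nlinarith : 0 ≤ m * gs (m-1) a - 1/4)]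
  rcases le_total u u' with h | h
  · rw [abs_sub_comm, abs_sub_comm (|u| ^ m), abs_of_nonneg (sub_nonneg.2 h)]
    exact (key u u' hu hu' h3 h).trans (le_abs_self _)
  · rw [abs_of_nonneg (sub_nonneg.2 h)]
    exact (key u' u hu' hu h4 h).trans (le_abs_self _)


theorem gs_abs_le (m a : ℝ) (h1 : 3/2 < m) (ha : |a| ≤ 1) : |gs (m-1) a| ≤ 1 := by
  unfold gs
  rw [abs_mul, abs_of_nonneg (by positivity)]
  have := Real.rpow_le_one (abs_nonneg a) ha (by linarith : 0 ≤ m - 1)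
  have h3 : |Real.sign a| ≤ 1 := by
    rcases Real.sign_apply_eq a with h | h | h <;> simp [h]
  exact mul_le_one₀ this (abs_nonneg _) h3

theorem ulem0 (m u s : ℝ) (h1 : 3/2 < m) (h2 : m < 2) (hu0 : 0 ≤ u) (hu : u ≤ 1) (hs : 0 < s)
    (hs1 : s ≤ 1/8) :
    |u - s * (m * gs (m-1) u)| ≤ 1 ∧
    0 ≤ m ^ 2 * (gs (m-1) (u - s * (m * gs (m-1) u)) * gs (m-1) u) + 4 * (1 - 2*s) * (1 - |u| ^ m) := by
  have hg : gs (m-1) u = u ^ (m-1) := gs_nn _ _ (by linarith) hu0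
  have hg0 : 0 ≤ u ^ (m-1) := by positivity
  have hg1 : u ^ (m-1) ≤ 1 := Real.rpow_le_one hu0 hu (by linarith)
  have hum : |u| ^ m ≤ u := by
    rw [abs_of_nonneg hu0]
    rcases hu0.eq_or_lt with rfl | h
    · rw [Real.zero_rpow (by linarith)]
    · conv_rhs => rw [← Real.rpow_one u]
      exact Real.rpow_le_rpow_of_exponent_ge h hu (by linarith)
  rw [hg]
  have hsm : s * m ≤ 1/4 := by nlinarith
  have hsm0 : 0 < s * m := by nlinarith
  have hsg : s * (m * u ^ (m-1)) ≤ 1/4 := by nlinarith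
  have hsg0 : 0 ≤ s * (m * u ^ (m-1)) := by rw [← mul_assoc]; positivity
  refine ⟨abs_le.2 ⟨by linarith, by linarith⟩, ?_⟩
  rcases le_or_gt 0 (u - s * (m * u ^ (m-1))) with h | h
  · have h3 : 0 ≤ gs (m-1) (u - s * (m * u ^ (m-1))) := by
      rw [gs_nn _ _ (by linarith) h]; positivity
    have : 0 ≤ 1 - |u| ^ m := by linarith
    have : 0 ≤ 1 - 2 * s := by linarith
    positivity
  · set t := -(u - s * (m * u ^ (m-1))) with ht
    have ht0 : 0 < t := by linarith
    have ht1 : t ≤ 1/4 := by linarith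
    have e : gs (m-1) (u - s * (m * u ^ (m-1))) = - t ^ (m-1) := by
      rw [← gs_nn (m-1) t (by linarith) ht0.le, ht, gs_neg]; ring
    rw [e]
    have h5 : t ^ (m-1) ≤ 1/2 := by
      calc t ^ (m-1) ≤ t ^ (1/2:ℝ) :=
            Real.rpow_le_rpow_of_exponent_ge ht0 (by linarith) (by linarith)
        _ ≤ (1/4:ℝ) ^ (1/2:ℝ) := by gcongr
        _ = 1/2 := by
            rw [← Real.sqrt_eq_rpow, show (1/4:ℝ) = (1/2)^2 by norm_num]
            exact Real.sqrt_sq (by norm_num)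
    have h6 : 0 ≤ t ^ (m-1) := by positivity
    have h7 : t ^ (m-1) * u ^ (m-1) ≤ 1/2 := by nlinarith
    have h8 : 0 ≤ t ^ (m-1) * u ^ (m-1) := by positivity
    have h9 : m ^ 2 ≤ 4 := by nlinarith
    have h10 : m ^ 2 * (t ^ (m-1) * u ^ (m-1)) ≤ 2 := by nlinarith
    have h11 : 3/4 ≤ 1 - |u| ^ m := by linarith
    nlinarith

theorem ulem (m u s : ℝ) (h1 : 3/2 < m) (h2 : m < 2) (hu : |u| ≤ 1) (hs : 0 < s)
    (hs1 : s ≤ 1/8) :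
    |u - s * (m * gs (m-1) u)| ≤ 1 ∧
    0 ≤ m ^ 2 * (gs (m-1) (u - s * (m * gs (m-1) u)) * gs (m-1) u) + 4 * (1 - 2*s) * (1 - |u| ^ m) := by
  rcases le_total 0 u with h | h
  · exact ulem0 m u s h1 h2 h (abs_le.1 hu).2 hs hs1
  · have := ulem0 m (-u) s h1 h2 (by linarith) (by linarith [(abs_le.1 hu).1]) hs hs1
    rw [gs_neg] at this
    have e : -u - s * (m * -gs (m-1) u) = -(u - s * (m * gs (m-1) u)) := by ring
    rw [e, gs_neg, abs_neg, abs_neg, neg_mul_neg] at this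
    exact this

theorem rhom_real (m : ℝ) (w : C2) : rhom m w =
    ((w 1).re ^ 2 + (w 1).im ^ 2) + |(w 0).re| ^ m + (w 0).im ^ 2 - 1 := by
  unfold rhom
  rw [Complex.sq_norm, Complex.normSq_apply]; ring

theorem C2norm_sq (w : C2) : ‖w‖ ^ 2 =
    (w 0).re ^ 2 + (w 0).im ^ 2 + ((w 1).re ^ 2 + (w 1).im ^ 2) := by
  rw [EuclideanSpace.norm_sq_eq, Fin.sum_univ_two, Complex.sq_norm, Complex.normSq_apply,
    Complex.sq_norm, Complex.normSq_apply]; ring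

theorem u_le (m : ℝ) (h1 : 3/2 < m) (w : C2) (h : rhom m w ≤ 0) : |(w 0).re| ≤ 1 := by
  rw [rhom_real] at h
  by_contra hc
  push Not at hc
  have := Real.one_lt_rpow hc (by linarith : 0 < m)
  nlinarith [sq_nonneg (w 1).re, sq_nonneg (w 1).im, sq_nonneg (w 0).im]

theorem Delta_re (m : ℝ) (w z : C2) : 2 * (Deltam m w z).re =
    m * gs (m-1) (w 0).re * ((w 0).re - (z 0).re) + 2 * (w 0).im * ((w 0).im - (z 0).im)
    + 2 * (w 1).re * ((w 1).re - (z 1).re) + 2 * (w 1).im * ((w 1).im - (z 1).im) := by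
  unfold Deltam gs
  simp [-ofReal_mul]
  ring

theorem re_lower (m : ℝ) (h1 : 3/2 < m) (h2 : m < 2) (w z : C2) (hw : rhom m w = 0)
    (hz : |(z 0).re| ≤ 1) :
    - rhom m z + 1/4 * ‖w - z‖ ^ 2 ≤ 2 * (Deltam m w z).re := by
  have hu := u_le m h1 w hw.le
  have hB := strongconv m _ _ h1 h2 hu hz
  rw [Delta_re, C2norm_sq]
  rw [rhom_real] at hw ⊢
  simp only [PiLp.sub_apply, Complex.sub_re, Complex.sub_im]
  nlinarith [sq_nonneg ((w 0).im - (z 0).im), sq_nonneg ((w 1).im - (z 1).im),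
    sq_nonneg ((w 1).re - (z 1).re)]

theorem grad_norm (m : ℝ) (h1 : 3/2 < m) (hm2 : m < 2) (z : C2) (hz : rhom m z = 0) : 1 ≤ ‖gradRhom m z‖ := by
  have hu := u_le m h1 z hz.le
  have h : 1 ≤ ‖gradRhom m z‖ ^ 2 := by
    rw [C2norm_sq]
    rw [rhom_real] at hz
    have hg : |(z 0).re| ^ m ≤ (m * |(z 0).re| ^ (m - 1) * Real.sign (z 0).re) ^ 2 := by
      rcases eq_or_ne (z 0).re 0 with h | h
      · rw [h, abs_zero, Real.zero_rpow (by linarith)]; positivity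
      · have hs : Real.sign (z 0).re ^ 2 = 1 := by
          rcases lt_or_gt_of_ne h with h | h
          · rw [Real.sign_of_neg h]; simp
          · rw [Real.sign_of_pos h]; simp
        rw [mul_pow, hs, mul_one, mul_pow]
        have : |(z 0).re| ^ m ≤ (|(z 0).re| ^ (m - 1)) ^ 2 := by
          rw [← Real.rpow_natCast, ← Real.rpow_mul (abs_nonneg _)]
          refine Real.rpow_le_rpow_of_exponent_ge (abs_pos.2 h) hu ?_
          push_cast; linarith
        have h1m : 1 ≤ m ^ 2 := by nlinarith
        nlinarith [sq_nonneg (|(z 0).re| ^ (m - 1)), mul_nonneg (sub_nonneg.2 h1m) (sq_nonneg (|(z 0).re| ^ (m - 1)))]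
    simp [gradRhom, -ofReal_mul]
    nlinarith [sq_nonneg (z 1).re, sq_nonneg (z 1).im, sq_nonneg (z 0).im]
  nlinarith [norm_nonneg (gradRhom m z)]

theorem zeps (m : ℝ) (h1 : 3/2 < m) (h2 : m < 2) (z : C2) (hz : rhom m z = 0) (ε : ℝ)
    (he : 0 < ε) (he1 : ε < 1/8) :
    |((z + ε • Nm m z) 0).re| ≤ 1 ∧ rhom m (z + ε • Nm m z) ≤ - (1/4 * ε ^ 2) := by
  have hG := grad_norm m h1 h2 z hz
  have hu := u_le m h1 z hz.le
  set s := ε * ‖gradRhom m z‖⁻¹ with hs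
  have hs0 : 0 < s := by positivity
  have hs1 : s ≤ 1/8 := by
    have : ‖gradRhom m z‖⁻¹ ≤ 1 := inv_le_one_of_one_le₀ hG
    nlinarith
  have hse : s ^ 2 * ‖gradRhom m z‖ ^ 2 = ε ^ 2 := by
    rw [hs]; field_simp
  have e0 : ((z + ε • Nm m z) 0).re = (z 0).re - s * (m * gs (m-1) (z 0).re) := by
    simp [Nm, gradRhom, gs, hs, -ofReal_mul]; ring
  have e1 : ((z + ε • Nm m z) 0).im = (z 0).im - s * (2 * (z 0).im) := by
    simp [Nm, gradRhom, hs]; ring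
  have e2 : ((z + ε • Nm m z) 1).re = (z 1).re - s * (2 * (z 1).re) := by
    simp [Nm, gradRhom, hs]; ring
  have e3 : ((z + ε • Nm m z) 1).im = (z 1).im - s * (2 * (z 1).im) := by
    simp [Nm, gradRhom, hs]; ring
  have eg : ‖gradRhom m z‖ ^ 2 = (m * gs (m-1) (z 0).re) ^ 2 + (2 * (z 0).im) ^ 2
      + ((2 * (z 1).re) ^ 2 + (2 * (z 1).im) ^ 2) := by
    rw [C2norm_sq]; simp [gradRhom, gs]; ring
  obtain ⟨hA, hB⟩ := ulem m (z 0).re s h1 h2 hu hs0 hs1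
  rw [rhom_real, e0, e1, e2, e3]
  refine ⟨hA, ?_⟩
  have hC := strongconv m _ _ h1 h2 hA hu
  rw [rhom_real] at hz
  rw [eg] at hse
  set gg := gs (m-1) (z 0).re
  set g2 := gs (m-1) ((z 0).re - s * (m * gg))
  set a := |(z 0).re - s * (m * gg)| ^ m
  have h3 : 0 ≤ s * (m ^ 2 * (g2 * gg) + 4 * (1 - 2*s) * (1 - |(z 0).re| ^ m)) :=
    mul_nonneg hs0.le hB
  have h4 : 1 - |(z 0).re| ^ m = (z 1).re ^ 2 + (z 1).im ^ 2 + (z 0).im ^ 2 := by linarith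
  rw [h4] at h3
  rw [← hse]
  nlinarith [sq_nonneg (s * (z 1).re), sq_nonneg (s * (z 1).im), sq_nonneg (s * (z 0).im)]

theorem Nm_norm (m : ℝ) (h1 : 3/2 < m) (h2 : m < 2) (z : C2) (hz : rhom m z = 0) :
    ‖Nm m z‖ = 1 := by
  have hG := grad_norm m h1 h2 z hz
  unfold Nm
  rw [norm_smul, norm_neg, norm_inv, norm_norm]
  exact inv_mul_cancel₀ (by linarith)

theorem Delta_diff (m : ℝ) (h1 : 3/2 < m) (h2 : m < 2) (w z : C2) (hw : rhom m w = 0)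
    (hz : rhom m z = 0) (ε : ℝ) (he : 0 < ε) :
    ‖Deltam m w z - Deltam m w (z + ε • Nm m z)‖ ≤ 3 * ε := by
  have hN := Nm_norm m h1 h2 z hz
  have hu := u_le m h1 w hw.le
  have hN0 : ‖Nm m z 0‖ ≤ 1 := hN ▸ PiLp.norm_apply_le (Nm m z) 0
  have hN1 : ‖Nm m z 1‖ ≤ 1 := hN ▸ PiLp.norm_apply_le (Nm m z) 1
  have hr := hw
  unfold rhom at hr
  have hp : 0 ≤ |(w 0).re| ^ m := by positivity
  have hw1 : ‖w 1‖ ≤ 1 := by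
    nlinarith [norm_nonneg (w 1), sq_nonneg (w 0).im]
  have hv : |(w 0).im| ≤ 1 := by
    rw [← sq_le_one_iff_abs_le_one]
    nlinarith [sq_nonneg ‖w 1‖]
  have hg := gs_abs_le m (w 0).re h1 hu
  have e : Deltam m w z - Deltam m w (z + ε • Nm m z) =
      ε * (((m / 2 * gs (m-1) (w 0).re : ℝ) - I * ((w 0).im : ℂ)) * Nm m z 0
        + (starRingEnd ℂ) (w 1) * Nm m z 1) := by
    unfold Deltam gs
    simp
    ring
  have hc : ‖((m / 2 * gs (m-1) (w 0).re : ℝ) - I * ((w 0).im : ℂ))‖ ≤ 2 := by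
    refine (norm_sub_le _ _).trans ?_
    rw [norm_mul, norm_I, one_mul, Complex.norm_real, Complex.norm_real, Real.norm_eq_abs,
      Real.norm_eq_abs, abs_mul, abs_of_pos (by linarith : 0 < m / 2)]
    nlinarith [abs_nonneg (gs (m-1) (w 0).re)]
  rw [e, norm_mul, Complex.norm_real, Real.norm_eq_abs, abs_of_pos he, mul_comm]
  gcongr
  refine (norm_add_le _ _).trans ?_
  rw [norm_mul, norm_mul, RCLike.norm_conj]
  have := mul_le_mul hc hN0 (norm_nonneg _) (by norm_num)
  have := mul_le_mul hw1 hN1 (norm_nonneg _) (by norm_num)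
  linarith

theorem inv_sq_diff (A B : ℂ) (R ε β : ℝ) (hR : 0 < R) (hA : R ≤ ‖A‖) (hB : R ≤ ‖B‖)
    (he : 0 < ε) (hd : ‖A - B‖ ≤ 3 * ε) (hb0 : 0 < β) (hb1 : β < 1) :
    ‖(B ^ 2)⁻¹ - (A ^ 2)⁻¹‖ ≤ 6 / R ^ 2 * (ε / R) ^ β := by
  have hA0 : A ≠ 0 := norm_pos_iff.1 (hR.trans_le hA)
  have hB0 : B ≠ 0 := norm_pos_iff.1 (hR.trans_le hB)
  have iA : ‖A⁻¹‖ ≤ 1 / R := by rw [norm_inv, ← one_div]; gcongr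
  have iB : ‖B⁻¹‖ ≤ 1 / R := by rw [norm_inv, ← one_div]; gcongr
  have e : (B ^ 2)⁻¹ - (A ^ 2)⁻¹ = (B⁻¹ - A⁻¹) * (B⁻¹ + A⁻¹) := by ring
  have e2 : B⁻¹ - A⁻¹ = (A - B) * A⁻¹ * B⁻¹ := by field_simp
  have hsum : ‖B⁻¹ + A⁻¹‖ ≤ 2 / R := (norm_add_le _ _).trans (by
    have : 2 / R = 1 / R + 1 / R := by ring
    linarith)
  have hdiff : ‖B⁻¹ - A⁻¹‖ ≤ 3 / R * (ε / R) ^ β := by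
    rcases le_total (ε / R) 1 with h | h
    · have h3 : ε / R ≤ (ε / R) ^ β := by
        conv_lhs => rw [← Real.rpow_one (ε / R)]
        exact Real.rpow_le_rpow_of_exponent_ge (by positivity) h hb1.le
      calc ‖B⁻¹ - A⁻¹‖ ≤ (3 * ε) * (1 / R) * (1 / R) := by
            rw [e2, norm_mul, norm_mul]; gcongr
        _ = 3 / R * (ε / R) := by ring
        _ ≤ _ := by gcongr
    · have h3 : 1 ≤ (ε / R) ^ β := Real.one_le_rpow h hb0.le
      calc ‖B⁻¹ - A⁻¹‖ ≤ 1 / R + 1 / R := (norm_sub_le _ _).trans (by linarith)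
        _ ≤ 3 / R * 1 := by
            have : 0 < 1 / R := by positivity
            have : 3 / R * 1 = 3 * (1 / R) := by ring
            linarith
        _ ≤ _ := by gcongr
  rw [e, norm_mul]
  calc ‖B⁻¹ - A⁻¹‖ * ‖B⁻¹ + A⁻¹‖ ≤ (3 / R * (ε / R) ^ β) * (2 / R) := by gcongr
    _ = _ := by ring

theorem pointwise (m β : ℝ) (h1 : 3/2 < m) (h2 : m < 2) (hb0 : 0 < β) (hb : β < m - 3/2)
    (w z : C2) (hw : rhom m w = 0) (hz : rhom m z = 0) (ε : ℝ) (he : 0 < ε) (he1 : ε < 1/8) :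
    (ENNReal.ofReal |(w 0).re|) ^ (2 * m - 4) *
            (if Deltam m w z = 0 ∨ Deltam m w (z + ε • Nm m z) = 0 then (⊤ : ℝ≥0∞)
              else ENNReal.ofReal (‖w - z‖ ^ 2 *
                ‖((Deltam m w (z + ε • Nm m z)) ^ 2)⁻¹ - ((Deltam m w z) ^ 2)⁻¹‖))
    ≤ ENNReal.ofReal (96 * 16 ^ (1 + β) * ε ^ β) *
      ((ENNReal.ofReal |(w 0).re|) ^ (2 * m - 4) * (ENNReal.ofReal ‖w - z‖) ^ (-(2 + 2 * β))) := by
  have hC : 0 < 96 * 16 ^ (1 + β) * ε ^ β := by positivity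
  rcases eq_or_ne w z with rfl | hne
  · rw [sub_self, norm_zero, ENNReal.ofReal_zero, ENNReal.zero_rpow_of_neg (by linarith)]
    have : (ENNReal.ofReal |(w 0).re|) ^ (2 * m - 4) ≠ 0 := by
      intro h
      rcases ENNReal.rpow_eq_zero_iff.1 h with h | h
      · linarith [h.2]
      · exact ENNReal.ofReal_ne_top h.1
    rw [ENNReal.mul_top this, ENNReal.mul_top (ENNReal.ofReal_pos.2 hC).ne']
    exact le_top
  have hD : 0 < ‖w - z‖ := norm_pos_iff.2 (sub_ne_zero.2 hne)
  set R := ‖w - z‖ ^ 2 / 16 with hR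
  have hR0 : 0 < R := by positivity
  have hA : R ≤ ‖Deltam m w z‖ := by
    have := re_lower m h1 h2 w z hw (u_le m h1 z hz.le)
    have h3 := Complex.re_le_norm (Deltam m w z)
    rw [hz] at this
    nlinarith [sq_nonneg ‖w - z‖]
  obtain ⟨hze, hrz⟩ := zeps m h1 h2 z hz ε he he1
  have hB : R ≤ ‖Deltam m w (z + ε • Nm m z)‖ := by
    have h4 := re_lower m h1 h2 w _ hw hze
    have h3 := Complex.re_le_norm (Deltam m w (z + ε • Nm m z))
    have h5 : ‖w - z‖ ≤ ‖w - (z + ε • Nm m z)‖ + ε := by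
      calc ‖w - z‖ = ‖(w - (z + ε • Nm m z)) + ε • Nm m z‖ := by congr 1; abel
        _ ≤ _ := norm_add_le _ _
        _ = _ := by rw [norm_smul, Nm_norm m h1 h2 z hz, Real.norm_eq_abs, abs_of_pos he, mul_one]
    have h6 : ‖w - z‖ ^ 2 ≤ (‖w - (z + ε • Nm m z)‖ + ε) ^ 2 := by gcongr
    nlinarith [sq_nonneg (‖w - (z + ε • Nm m z)‖ - ε)]
  have hd := inv_sq_diff _ _ R ε β hR0 hA hB he (Delta_diff m h1 h2 w z hw hz ε he) hb0 (by linarith)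
  rw [if_neg]
  swap
  · rintro (h | h)
    · rw [h, norm_zero] at hA; linarith
    · rw [h, norm_zero] at hB; linarith
  rw [mul_left_comm]
  gcongr
  rw [ENNReal.ofReal_rpow_of_pos hD, ← ENNReal.ofReal_mul hC.le]
  refine ENNReal.ofReal_le_ofReal ?_
  calc _ ≤ ‖w - z‖ ^ 2 * (6 / R ^ 2 * (ε / R) ^ β) := by gcongr
    _ = 96 * ε ^ β * R ^ (-(1 + β)) := by
        rw [Real.div_rpow he.le hR0.le, Real.rpow_neg hR0.le, Real.rpow_add hR0, Real.rpow_one]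
        have : ‖w - z‖ ^ 2 = 16 * R := by rw [hR]; ring
        rw [this]
        field_simp
        ring
    _ = _ := by
        rw [hR, Real.div_rpow (by positivity) (by norm_num), ← Real.rpow_natCast,
          ← Real.rpow_mul hD.le, Real.rpow_neg (by norm_num : (0:ℝ) ≤ 16), div_inv_eq_mul]
        have : ((2:ℕ):ℝ) * -(1 + β) = -(2 + 2 * β) := by push_cast; ring
        rw [this]; ring

/-- real coordinates on `C2` -/
def crd (w : C2) : Fin 4 → ℝ := ![(w 0).re, (w 0).im, (w 1).re, (w 1).im]

/-- one-variable pieces of `rhom` -/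
def phi (m : ℝ) (i : Fin 4) (s : ℝ) : ℝ := if i = 0 then |s| ^ m else s ^ 2

theorem crd_cont (j : Fin 4) : Continuous (fun w : C2 => crd w j) := by
  fin_cases j <;> simp [crd] <;> fun_prop

theorem rhom_phi (m : ℝ) (w : C2) : rhom m w = ∑ j, phi m j (crd w j) - 1 := by
  rw [rhom_real, Fin.sum_univ_four]
  simp [phi, crd]
  ring

theorem norm_crd (w z : C2) : ‖w - z‖ ^ 2 = ∑ j, (crd w j - crd z j) ^ 2 := by
  rw [C2norm_sq, Fin.sum_univ_four]
  simp [crd]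
  ring

theorem phi_nonneg (m : ℝ) (i : Fin 4) (s : ℝ) : 0 ≤ phi m i s := by
  unfold phi; split_ifs <;> positivity

theorem crd_abs_le (m : ℝ) (h1 : 3/2 < m) (w : C2) (hw : rhom m w = 0) (j : Fin 4) :
    |crd w j| ≤ 1 := by
  rw [rhom_phi] at hw
  have h : phi m j (crd w j) ≤ 1 := by
    have := Finset.single_le_sum (f := fun j => phi m j (crd w j))
      (fun i _ => phi_nonneg m i _) (Finset.mem_univ j)
    linarith
  unfold phi at h
  split_ifs at h with h0
  · by_contra hc
    push Not at hc
    have := Real.one_lt_rpow hc (by linarith : 0 < m)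
    linarith
  · rwa [sq_le_one_iff_abs_le_one] at h

theorem phi_lip (m : ℝ) (h1 : 3/2 < m) (h2 : m < 2) (i : Fin 4) (s t : ℝ) (hs : |s| ≤ 1)
    (ht : |t| ≤ 1) : |phi m i s - phi m i t| ≤ 2 * |s - t| := by
  unfold phi
  split_ifs
  · exact absrpow_lip m s t h1 h2 hs ht
  · rw [sq_sub_sq, abs_mul]
    gcongr
    exact (abs_add_le _ _).trans (by linarith)

theorem phi_anti (m : ℝ) (h1 : 3/2 < m) (h2 : m < 2) (i : Fin 4) (s t σ : ℝ) (hs : |s| ≤ 1)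
    (ht : |t| ≤ 1) (hσ : |σ| = 1) (h3 : 1/4 ≤ σ * s) (h4 : 1/4 ≤ σ * t) :
    1/4 * |s - t| ≤ |phi m i s - phi m i t| := by
  have es : |σ * s| = |s| := by rw [abs_mul, hσ, one_mul]
  have et : |σ * t| = |t| := by rw [abs_mul, hσ, one_mul]
  have ed : |σ * s - σ * t| = |s - t| := by rw [← mul_sub, abs_mul, hσ, one_mul]
  unfold phi
  split_ifs
  · have := absrpow_anti m (σ * s) (σ * t) h1 h2 (es ▸ hs) (et ▸ ht) h3 h4
    rwa [es, et, ed] at this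
  · rw [sq_sub_sq, abs_mul]
    gcongr
    have : |σ * s + σ * t| = |s + t| := by rw [← mul_add, abs_mul, hσ, one_mul]
    rw [← this]
    exact le_trans (by linarith) (le_abs_self _)

/-- chart pieces -/
def Epc (m : ℝ) (i : Fin 4) (σ : ℝ) : Set C2 := {w | rhom m w = 0 ∧ 1/4 ≤ σ * crd w i}

/-- chart maps -/
def Fch (i : Fin 4) (w : C2) : Fin 3 → ℝ := fun k => crd w (i.succAbove k)

theorem Fch_meas (i : Fin 4) : Measurable (Fch i) :=
  (continuous_pi fun k => crd_cont (i.succAbove k)).measurable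

theorem Fch_anti (m : ℝ) (h1 : 3/2 < m) (h2 : m < 2) (i : Fin 4) (σ : ℝ) (hσ : |σ| = 1) :
    ∀ x ∈ Epc m i σ, ∀ y ∈ Epc m i σ, dist x y ≤ (48 : NNReal) * dist (Fch i x) (Fch i y) := by
  rintro x ⟨hx, hxi⟩ y ⟨hy, hyi⟩
  set d := dist (Fch i x) (Fch i y) with hd
  have hd0 : 0 ≤ d := dist_nonneg
  have hk : ∀ k, |crd x (i.succAbove k) - crd y (i.succAbove k)| ≤ d := by
    intro k
    have := dist_le_pi_dist (Fch i x) (Fch i y) k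
    rwa [Real.dist_eq] at this
  have hi : |crd x i - crd y i| ≤ 24 * d := by
    have ha := phi_anti m h1 h2 i _ _ σ (crd_abs_le m h1 x hx i) (crd_abs_le m h1 y hy i) hσ hxi hyi
    have hl : ∀ k, |phi m (i.succAbove k) (crd x (i.succAbove k))
        - phi m (i.succAbove k) (crd y (i.succAbove k))| ≤ 2 * d := fun k =>
      (phi_lip m h1 h2 _ _ _ (crd_abs_le m h1 x hx _) (crd_abs_le m h1 y hy _)).trans
        (by linarith [hk k])
    rw [rhom_phi, Fin.sum_univ_succAbove _ i, Fin.sum_univ_three] at hx hy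
    have b0 := abs_le.1 (hl 0)
    have b1 := abs_le.1 (hl 1)
    have b2 := abs_le.1 (hl 2)
    have : |phi m i (crd x i) - phi m i (crd y i)| ≤ 6 * d :=
      abs_le.2 ⟨by linarith, by linarith⟩
    linarith
  have hn : ‖x - y‖ ^ 2 ≤ (48 * d) ^ 2 := by
    rw [norm_crd, Fin.sum_univ_succAbove _ i, Fin.sum_univ_three]
    have c : ∀ a b : ℝ, |a| ≤ b → a ^ 2 ≤ b ^ 2 := fun a b h => sq_le_sq' (abs_le.1 h).1 (abs_le.1 h).2
    have c0 := c _ _ hi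
    have c1 := c _ _ (hk 0)
    have c2 := c _ _ (hk 1)
    have c3 := c _ _ (hk 2)
    nlinarith [sq_nonneg d]
  rw [dist_eq_norm]
  exact abs_le_of_sq_le_sq' hn (by positivity) |>.2

theorem cover (m : ℝ) (h1 : 3/2 < m) :
    bDm m ⊆ ⋃ i : Fin 4 × Bool, Epc m i.1 (if i.2 then 1 else -1) := by
  intro w hw
  have hw' : rhom m w = 0 := hw
  have : ∃ i, 1/4 ≤ |crd w i| := by
    by_contra hc
    push Not at hc
    have hp : ∀ i, phi m i (crd w i) < 1/4 := by
      intro i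
      have hi := hc i
      unfold phi
      split_ifs
      · refine lt_of_le_of_lt ?_ hi
        rcases (abs_nonneg (crd w i)).eq_or_lt with h | h
        · rw [← h, Real.zero_rpow (by linarith)]
        · conv_rhs => rw [← Real.rpow_one |crd w i|]
          exact Real.rpow_le_rpow_of_exponent_ge h (by linarith) (by linarith)
      · rw [← sq_abs]
        nlinarith [abs_nonneg (crd w i)]
    rw [rhom_phi, Fin.sum_univ_four] at hw'
    linarith [hp 0, hp 1, hp 2, hp 3]
  obtain ⟨i, hi⟩ := this
  rw [Set.mem_iUnion]
  rcases le_abs.1 hi with h | h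
  · exact ⟨(i, true), hw', by simpa using h⟩
  · exact ⟨(i, false), hw', by simpa using h⟩

theorem kern_inv (γ c t : ℝ) : kern γ c t = ((ENNReal.ofReal |t - c|)⁻¹) ^ γ := by
  unfold kern
  rw [ENNReal.rpow_neg, ENNReal.inv_rpow]

theorem young_max (A B : ℝ≥0∞) (a p : ℝ) (ha : 0 ≤ a) (hp : 0 ≤ p) :
    A ^ a * B ^ p ≤ A ^ (a + p) + B ^ (a + p) := by
  rw [ENNReal.rpow_add_of_nonneg (x := A) _ _ ha hp, ENNReal.rpow_add_of_nonneg (x := B) _ _ ha hp]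
  rcases le_total A B with h | h
  · refine le_trans ?_ le_add_self
    gcongr
  · refine le_trans ?_ le_self_add
    gcongr

/-- kernel in the first chart variable -/
def h0 (a p c : ℝ) (t : ℝ) : ℝ≥0∞ :=
  kern (a + p) 0 t + kern (a + p) c t + ((ENNReal.ofReal (1/4))⁻¹) ^ a * kern p c t

/-- kernels in the chart variables -/
def ker3 (a p q : ℝ) (c : Fin 3 → ℝ) : Fin 3 → ℝ → ℝ≥0∞ :=
  ![(Set.Icc (-1:ℝ) 1).indicator (h0 a p (c 0)), (Set.Icc (-1:ℝ) 1).indicator (kern q (c 1)),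
    (Set.Icc (-1:ℝ) 1).indicator (kern q (c 2))]

theorem ker3_meas (a p q : ℝ) (c : Fin 3 → ℝ) (k : Fin 3) : Measurable (ker3 a p q c k) := by
  have hh : Measurable (h0 a p (c 0)) := by
    unfold h0
    exact ((kern_meas _ _).add (kern_meas _ _)).add ((kern_meas _ _).const_mul _)
  fin_cases k
  · exact hh.indicator measurableSet_Icc
  · exact (kern_meas _ _).indicator measurableSet_Icc
  · exact (kern_meas _ _).indicator measurableSet_Icc

/-- the one-dimensional constant -/
def Kc (γ : ℝ) : ℝ≥0∞ := ∫⁻ t in Set.Icc (-2:ℝ) 2, kern γ 0 t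

theorem ker3_int (a p q : ℝ) (c : Fin 3 → ℝ) (hc : ∀ k, |c k| ≤ 1) :
    ∫⁻ t : Fin 3 → ℝ, ∏ k, ker3 a p q c k (t k) ≤
      (Kc (a + p) + Kc (a + p) + ((ENNReal.ofReal (1/4))⁻¹) ^ a * Kc p) * Kc q * Kc q := by
  rw [lint_pi _ (ker3_meas a p q c), Fin.prod_univ_three]
  simp only [ker3, Matrix.cons_val_zero, Matrix.cons_val_one,
    Matrix.cons_val, lintegral_indicator measurableSet_Icc]
  gcongr
  · unfold h0
    rw [lintegral_add_left (by exact (kern_meas _ _).add (kern_meas _ _)), lintegral_add_left (kern_meas _ _),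
      lintegral_const_mul _ (kern_meas _ _)]
    gcongr
    · exact kern_le _ _ (by simp)
    · exact kern_le _ _ (hc 0)
    · exact kern_le _ _ (hc 0)
  · exact kern_le _ _ (hc 1)
  · exact kern_le _ _ (hc 2)

theorem crd_dist (w z : C2) (j : Fin 4) : |crd w j - crd z j| ≤ ‖w - z‖ := by
  refine abs_le_of_sq_le_sq ?_ (norm_nonneg _)
  rw [norm_crd]
  exact Finset.single_le_sum (f := fun j => (crd w j - crd z j) ^ 2)
    (fun i _ => sq_nonneg _) (Finset.mem_univ j)

theorem ker_bound (m a p q : ℝ) (h1 : 3/2 < m) (ha : 0 ≤ a) (hp : 0 ≤ p) (hq : 0 ≤ q)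
    (i : Fin 4) (σ : ℝ) (hσ : |σ| = 1) (w z : C2) (hw : w ∈ Epc m i σ) :
    (ENNReal.ofReal |(w 0).re|) ^ (-a) * (ENNReal.ofReal ‖w - z‖) ^ (-(p + q + q)) ≤
      ∏ k, ker3 a p q (Fch i z) k (Fch i w k) := by
  have hI : ∀ k, Fch i w k ∈ Set.Icc (-1:ℝ) 1 := fun k =>
    abs_le.1 (crd_abs_le m h1 w hw.1 _)
  have hD : ∀ k, (ENNReal.ofReal ‖w - z‖)⁻¹ ≤ (ENNReal.ofReal |Fch i w k - Fch i z k|)⁻¹ := by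
    intro k
    exact ENNReal.inv_le_inv.2 (ENNReal.ofReal_le_ofReal (crd_dist w z _))
  rw [Fin.prod_univ_three]
  simp only [ker3, Matrix.cons_val_zero, Matrix.cons_val_one,
    Matrix.cons_val]
  rw [Set.indicator_of_mem (hI 0), Set.indicator_of_mem (hI 1), Set.indicator_of_mem (hI 2)]
  rw [ENNReal.rpow_neg, ENNReal.rpow_neg, ← ENNReal.inv_rpow, ← ENNReal.inv_rpow,
    ENNReal.rpow_add_of_nonneg _ _ (by positivity) hq, ENNReal.rpow_add_of_nonneg _ _ hp hq,
    ← mul_assoc, ← mul_assoc, kern_inv, kern_inv]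
  gcongr ?_ * ?_ ^ q * ?_ ^ q
  · unfold h0
    rw [kern_inv, kern_inv, kern_inv]
    by_cases hi : i = 0
    · subst hi
      refine le_trans ?_ le_add_self
      gcongr ?_ ^ a * ?_ ^ p
      · refine ENNReal.inv_le_inv.2 (ENNReal.ofReal_le_ofReal ?_)
        have := hw.2
        calc (1/4:ℝ) ≤ σ * crd w 0 := this
          _ ≤ |σ * crd w 0| := le_abs_self _
          _ = |(w 0).re| := by rw [abs_mul, hσ, one_mul]; rfl
      · exact hD 0
    · refine le_trans ?_ le_self_add
      have e : Fch i w 0 = (w 0).re := by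
        unfold Fch
        rw [Fin.succAbove_ne_zero_zero hi]; rfl
      rw [← e, sub_zero]
      refine le_trans ?_ (young_max _ _ a p ha hp)
      exact mul_le_mul_right (ENNReal.rpow_le_rpow (hD 0) hp) _
  · exact hD 1
  · exact hD 2

theorem int_bound (m β : ℝ) (h1 : 3/2 < m) (h2 : m < 2) (hb0 : 0 < β) (hb : β < m - 3/2) :
    ∃ K : ℝ≥0∞, K ≠ ∞ ∧ ∀ z, rhom m z = 0 →
      ∫⁻ w in bDm m, (ENNReal.ofReal |(w 0).re|) ^ (2 * m - 4) *
        (ENNReal.ofReal ‖w - z‖) ^ (-(2 + 2 * β)) ∂μH[3] ≤ K := by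
  set a := 4 - 2 * m with ha
  set η := (2 * m - 3 - 2 * β) / 4 with hη
  set q := 1 - η with hq
  set p := 2 * β + 2 * η with hp
  have ha0 : 0 ≤ a := by linarith
  have hη0 : 0 < η := by linarith
  have hq0 : 0 ≤ q := by linarith
  have hp0 : 0 ≤ p := by linarith
  set K1 := (Kc (a + p) + Kc (a + p) + ((ENNReal.ofReal (1/4))⁻¹) ^ a * Kc p) * Kc q * Kc q
  have hK1 : K1 ≠ ∞ := by
    have k1 : Kc (a + p) ≠ ∞ := (kern0_fin _ (by linarith)).ne
    have k2 : Kc p ≠ ∞ := (kern0_fin _ (by linarith)).ne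
    have k3 : Kc q ≠ ∞ := (kern0_fin _ (by linarith)).ne
    have k4 : ((ENNReal.ofReal (1/4))⁻¹) ^ a ≠ ∞ :=
      ENNReal.rpow_ne_top_of_nonneg ha0 (by simp)
    exact ENNReal.mul_ne_top (ENNReal.mul_ne_top (ENNReal.add_ne_top.2
      ⟨ENNReal.add_ne_top.2 ⟨k1, k1⟩, ENNReal.mul_ne_top k4 k2⟩) k3) k3
  have hK2 : ((48 : NNReal) : ℝ≥0∞) ^ (3:ℝ) * K1 ≠ ∞ :=
    ENNReal.mul_ne_top (ENNReal.rpow_ne_top_of_nonneg (by norm_num) ENNReal.coe_ne_top) hK1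
  refine ⟨∑ i : Fin 4 × Bool, ((48 : NNReal) : ℝ≥0∞) ^ (3:ℝ) * K1,
    ENNReal.sum_ne_top.2 fun _ _ => hK2, fun z hz => ?_⟩
  refine (lintegral_mono_set (cover m h1)).trans ?_
  refine (lintegral_iUnion_le _ _).trans ?_
  rw [tsum_fintype]
  refine Finset.sum_le_sum fun i _ => ?_
  have hσ : |(if i.2 then 1 else -1 : ℝ)| = 1 := by split_ifs <;> simp
  have e1 : 2 * m - 4 = -a := by rw [ha]; ring
  have e2 : 2 + 2 * β = p + q + q := by rw [hp, hq]; ring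
  have hG : Measurable (fun t : Fin 3 → ℝ => ∏ k, ker3 a p q (Fch i.1 z) k (t k)) :=
    Finset.measurable_prod _ (fun k _ => (ker3_meas _ _ _ _ k).comp (measurable_pi_apply k))
  calc _ ≤ ∫⁻ w in Epc m i.1 (if i.2 then 1 else -1),
        ∏ k, ker3 a p q (Fch i.1 z) k (Fch i.1 w k) ∂μH[3] := by
        refine setLIntegral_mono (hG.comp (Fch_meas i.1)) fun w hw => ?_
        rw [e1, e2]
        exact ker_bound m a p q h1 ha0 hp0 hq0 i.1 _ hσ w z hw
    _ ≤ _ := map_le_of_anti _ _ (Fch_meas i.1) 48 (Fch_anti m h1 h2 i.1 _ hσ) _ hG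
    _ ≤ _ := by
        gcongr
        exact ker3_int a p q _ fun k => crd_abs_le m h1 z hz _

/-- Fix `3/2 < m < 2` and `0 < β < m − 3/2`. There are `C < ∞`, `ε₀ > 0` such that for every
`z ∈ bD_m` and `0 < ε < ε₀`:
`∫_{bD_m} |Re w₁|^{2m−4}·|w−z|²·|Δ(w, z+εN(z))⁻² − Δ(w,z)⁻²| dH³(w) ≤ C·ε^β`
(the integrand is `+∞` where singular, e.g. at `w = z`). -/
theorem stmt17 (m β : ℝ) (hm1 : 3 / 2 < m) (hm2 : m < 2)
    (hβ0 : 0 < β) (hβ : β < m - 3 / 2) :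
    ∃ C ε₀ : ℝ, 0 < ε₀ ∧ ∀ z ∈ bDm m, ∀ ε : ℝ, 0 < ε → ε < ε₀ →
      ∫⁻ w in bDm m,
          (ENNReal.ofReal |(w 0).re|) ^ (2 * m - 4) *
            (if Deltam m w z = 0 ∨ Deltam m w (z + ε • Nm m z) = 0 then (⊤ : ℝ≥0∞)
              else ENNReal.ofReal (‖w - z‖ ^ 2 *
                ‖((Deltam m w (z + ε • Nm m z)) ^ 2)⁻¹ - ((Deltam m w z) ^ 2)⁻¹‖)) ∂μH[3]
        ≤ ENNReal.ofReal (C * ε ^ β) := by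
  obtain ⟨K, hK, hKb⟩ := int_bound m β hm1 hm2 hβ0 hβ
  refine ⟨96 * 16 ^ (1 + β) * K.toReal, 1/8, by norm_num, fun z hz ε he he1 => ?_⟩
  have hcl : MeasurableSet (bDm m) := by
    have hc : Continuous (rhom m) := by
      have e : rhom m = fun w => ∑ j, phi m j (crd w j) - 1 := funext (rhom_phi m)
      rw [e]
      refine (continuous_finsetSum _ fun j _ => ?_).sub continuous_const
      unfold phi
      split_ifs
      · exact (crd_cont j).abs.rpow_const fun _ => Or.inr (by linarith)
      · exact (crd_cont j).pow 2
    exact (isClosed_eq hc continuous_const).measurableSet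
  refine (setLIntegral_mono' hcl fun w hw =>
    pointwise m β hm1 hm2 hβ0 hβ w z hw hz ε he he1).trans ?_
  rw [lintegral_const_mul' _ _ ENNReal.ofReal_ne_top]
  calc _ ≤ ENNReal.ofReal (96 * 16 ^ (1 + β) * ε ^ β) * K := by
        gcongr
        exact hKb z hz
    _ = _ := by
        conv_lhs => rw [← ENNReal.ofReal_toReal hK]
        rw [← ENNReal.ofReal_mul (by positivity)]
        congr 1; ring

end
end

section
/- For every α ∈ (0,1] and every β with 0 ≤ β < α/2 there is a constant A_{α,β} < ∞ such that for every x₁ ∈ ℝ with |x₁| ≤ 1: ∫∫∫_{{(u₁,u₂,v₂)∈ℝ³ : u₁²+u₂²+v₂²<1}} |u₁−x₁|^{−1+α} · (u₁²+u₂²+v₂²)^{−(1+β)} du₁ du₂ dv₂ ≤ A_{α,β}; the constant A_{α,β} is independent of x₁. -/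
open MeasureTheory
open scoped ENNReal

lemma aux_fin (γ : ℝ) (h1 : γ < 1) :
    ∫⁻ w in Set.Ioc (-2:ℝ) 2, (ENNReal.ofReal |w|) ^ (-γ) < ⊤ := by
  have hI0 : IntervalIntegrable (fun x : ℝ => |x| ^ (-γ)) volume 0 2 := by
    have := intervalIntegral.intervalIntegrable_rpow' (a := 0) (b := 2) (r := -γ) (by linarith)
    refine this.congr ?_
    intro x hx
    rw [Set.uIoc_of_le (by norm_num)] at hx
    simp only [abs_of_pos hx.1]
  have hI1 : IntervalIntegrable (fun x : ℝ => |x| ^ (-γ)) volume (-2) 0 := by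
    have := (IntervalIntegrable.iff_comp_neg (f := fun x : ℝ => |x| ^ (-γ)) (a := 0) (b := 2)).1 hI0
    simpa using this.symm
  have hI := (hI1.trans hI0)
  rw [intervalIntegrable_iff_integrableOn_Ioc_of_le (by norm_num)] at hI
  have hfin := hI.lintegral_lt_top
  refine lt_of_le_of_lt (le_of_eq ?_) hfin
  apply lintegral_congr_ae
  have h0 : ∀ᵐ w : ℝ ∂(volume.restrict (Set.Ioc (-2:ℝ) 2)), w ≠ 0 :=
    ae_restrict_of_ae (Measure.ae_ne volume 0)
  filter_upwards [h0] with w hw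
  exact ENNReal.ofReal_rpow_of_pos (abs_pos.2 hw)

lemma aux_shift (γ x : ℝ) (hx : |x| ≤ 1) :
    ∫⁻ u in Set.Ioo (-1:ℝ) 1, (ENNReal.ofReal |u - x|) ^ (-γ) ≤
    ∫⁻ w in Set.Ioc (-2:ℝ) 2, (ENNReal.ofReal |w|) ^ (-γ) := by
  rw [← lintegral_indicator measurableSet_Ioo, ← lintegral_indicator measurableSet_Ioc,
    ← lintegral_sub_right_eq_self ((Set.Ioc (-2:ℝ) 2).indicator _) x]
  apply lintegral_mono
  intro u
  rw [abs_le] at hx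
  by_cases hu : u ∈ Set.Ioo (-1:ℝ) 1
  · have : u - x ∈ Set.Ioc (-2:ℝ) 2 := ⟨by linarith [hu.1], by linarith [hu.2]⟩
    simp [Set.indicator_of_mem hu, Set.indicator_of_mem this]
  · simp [Set.indicator_of_notMem hu]

lemma anti (a b : ℝ≥0∞) (s : ℝ) (hs : 0 ≤ s) (h : a ≤ b) : b ^ (-s) ≤ a ^ (-s) := by
  rw [ENNReal.rpow_neg, ENNReal.rpow_neg]
  exact ENNReal.inv_le_inv.2 (ENNReal.rpow_le_rpow h hs)

lemma aux_add (m : ℝ) (p q : ℝ) (hp : 0 ≤ p) (hq : 0 < q) :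
    (ENNReal.ofReal m) ^ (-p) * (ENNReal.ofReal m) ^ (-q) ≤ (ENNReal.ofReal m) ^ (-(p + q)) := by
  by_cases h : ENNReal.ofReal m = 0
  · rw [h, ENNReal.zero_rpow_of_neg (y := -(p+q)) (by linarith)]; exact le_top
  · rw [← ENNReal.rpow_add _ _ h ENNReal.ofReal_ne_top]; apply le_of_eq; congr 1; ring

lemma aux_two (a b p q : ℝ) (hp : 0 ≤ p) (hq : 0 < q) :
    (ENNReal.ofReal a) ^ (-p) * (ENNReal.ofReal b) ^ (-q) ≤
      (ENNReal.ofReal a) ^ (-(p + q)) + (ENNReal.ofReal b) ^ (-(p + q)) := by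
  rcases le_total a b with h | h
  · refine le_trans ?_ le_self_add
    refine le_trans ?_ (aux_add a p q hp hq)
    refine mul_le_mul_right ?_ _
    exact anti _ _ _ hq.le (ENNReal.ofReal_le_ofReal h)
  · refine le_trans ?_ le_add_self
    refine le_trans ?_ (aux_add b p q hp hq)
    refine mul_le_mul_left ?_ _
    exact anti _ _ _ hp (ENNReal.ofReal_le_ofReal h)

lemma aux_prod (x y z s t β : ℝ) (hs : 0 < s) (ht : 0 < t) (h : s + t + t = 2 * (1 + β)) :
    (ENNReal.ofReal (x ^ 2 + y ^ 2 + z ^ 2)) ^ (-(1 + β)) ≤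
      (ENNReal.ofReal |x|) ^ (-s) * ((ENNReal.ofReal |y|) ^ (-t) * (ENNReal.ofReal |z|) ^ (-t)) := by
  set r := Real.sqrt (x ^ 2 + y ^ 2 + z ^ 2) with hr
  have hx : |x| ≤ r := Real.abs_le_sqrt (by nlinarith [sq_nonneg y, sq_nonneg z])
  have hy : |y| ≤ r := Real.abs_le_sqrt (by nlinarith [sq_nonneg x, sq_nonneg z])
  have hz : |z| ≤ r := Real.abs_le_sqrt (by nlinarith [sq_nonneg y, sq_nonneg x])
  have hR : x ^ 2 + y ^ 2 + z ^ 2 = r ^ 2 := (Real.sq_sqrt (by positivity)).symm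
  have hr0 : 0 ≤ r := Real.sqrt_nonneg _
  rw [hR]
  by_cases h0 : r = 0
  · have hx0 : |x| = 0 := le_antisymm (h0 ▸ hx) (abs_nonneg _)
    have hy0 : |y| = 0 := le_antisymm (h0 ▸ hy) (abs_nonneg _)
    have hz0 : |z| = 0 := le_antisymm (h0 ▸ hz) (abs_nonneg _)
    rw [hx0, hy0, hz0]
    simp [hs, ht]
  · have hrp : ENNReal.ofReal r ≠ 0 := by
      simpa using lt_of_le_of_ne hr0 (Ne.symm h0)
    have e : (ENNReal.ofReal (r ^ 2)) ^ (-(1 + β)) =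
        (ENNReal.ofReal r) ^ (-s) * ((ENNReal.ofReal r) ^ (-t) * (ENNReal.ofReal r) ^ (-t)) := by
      rw [← ENNReal.rpow_add _ _ hrp ENNReal.ofReal_ne_top,
        ← ENNReal.rpow_add _ _ hrp ENNReal.ofReal_ne_top, ENNReal.ofReal_pow hr0,
        ← ENNReal.rpow_natCast, ← ENNReal.rpow_mul]
      congr 1
      push_cast
      linarith
    rw [e]
    gcongr ?_ * (?_ * ?_)
    · exact anti _ _ _ hs.le (ENNReal.ofReal_le_ofReal hx)
    · exact anti _ _ _ ht.le (ENNReal.ofReal_le_ofReal hy)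
    · exact anti _ _ _ ht.le (ENNReal.ofReal_le_ofReal hz)

/-- For every `α ∈ (0,1]` and `0 ≤ β < α/2` there is `A_{α,β} < ∞`, independent of `x₁`,
such that for every `x₁ ∈ ℝ` with `|x₁| ≤ 1`:
`∫∫∫_{u₁²+u₂²+v₂²<1} |u₁−x₁|^{−1+α}·(u₁²+u₂²+v₂²)^{−(1+β)} du₁ du₂ dv₂ ≤ A_{α,β}`
(coordinates `p = (u₁, u₂, v₂)`; the integrand is `+∞` at its singular points). -/
theorem stmt19 (α β : ℝ) (hα0 : 0 < α) (hα1 : α ≤ 1) (hβ0 : 0 ≤ β) (hβ : β < α / 2) :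
    ∃ A : ℝ, ∀ x₁ : ℝ, |x₁| ≤ 1 →
      ∫⁻ p in {p : ℝ × ℝ × ℝ | p.1 ^ 2 + p.2.1 ^ 2 + p.2.2 ^ 2 < 1},
          (ENNReal.ofReal |p.1 - x₁|) ^ (-1 + α) *
            (ENNReal.ofReal (p.1 ^ 2 + p.2.1 ^ 2 + p.2.2 ^ 2)) ^ (-(1 + β))
        ≤ ENNReal.ofReal A := by
  obtain ⟨s, hs⟩ : ∃ s, s = (2 * β + α) / 2 := ⟨_, rfl⟩
  obtain ⟨t, ht⟩ : ∃ t, t = (2 * (1 + β) - s) / 2 := ⟨_, rfl⟩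
  have hs0 : 0 < s := by linarith
  have ht0 : 0 < t := by linarith
  have ht1 : t < 1 := by linarith
  have hst : s + t + t = 2 * (1 + β) := by linarith
  obtain ⟨γ, hγ⟩ : ∃ γ, γ = (1 - α) + s := ⟨_, rfl⟩
  have hγ1 : γ < 1 := by linarith
  set K : ℝ → ℝ≥0∞ := fun γ => ∫⁻ w in Set.Ioc (-2:ℝ) 2, (ENNReal.ofReal |w|) ^ (-γ) with hK
  have hKγ : K γ < ⊤ := aux_fin γ hγ1
  have hKt : K t < ⊤ := aux_fin t ht1
  refine ⟨((K γ + K γ) * (K t * K t)).toReal, fun x hx => ?_⟩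
  rw [ENNReal.ofReal_toReal (by finiteness)]
  set I := Set.Ioo (-1:ℝ) 1 with hI
  have hsub : {p : ℝ × ℝ × ℝ | p.1 ^ 2 + p.2.1 ^ 2 + p.2.2 ^ 2 < 1} ⊆ I ×ˢ (I ×ˢ I) := by
    rintro ⟨a, b, c⟩ h
    simp only [Set.mem_setOf_eq] at h
    have key : ∀ d : ℝ, d ^ 2 < 1 → d ∈ I := fun d hd => abs_lt.1 ((sq_lt_one_iff_abs_lt_one d).1 hd)
    exact ⟨key _ (by nlinarith [sq_nonneg b, sq_nonneg c]),
      key _ (by nlinarith [sq_nonneg a, sq_nonneg c]),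
      key _ (by nlinarith [sq_nonneg b, sq_nonneg a])⟩
  have hmeas : ∀ y δ : ℝ, Measurable fun u : ℝ => (ENNReal.ofReal |u - y|) ^ (-δ) := by
    intro y δ; fun_prop
  have hmeas0 : ∀ δ : ℝ, Measurable fun u : ℝ => (ENNReal.ofReal |u|) ^ (-δ) := by
    intro δ; fun_prop
  have h0 : ∀ δ : ℝ, ∫⁻ u in I, (ENNReal.ofReal |u|) ^ (-δ) ≤ K δ := by
    intro δ
    simpa using aux_shift δ 0 (by simp)
  calc _ ≤ ∫⁻ p in I ×ˢ (I ×ˢ I), (ENNReal.ofReal |p.1 - x|) ^ (-1 + α) *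
            (ENNReal.ofReal (p.1 ^ 2 + p.2.1 ^ 2 + p.2.2 ^ 2)) ^ (-(1 + β)) :=
          lintegral_mono_set hsub
    _ ≤ ∫⁻ p in I ×ˢ (I ×ˢ I),
          ((ENNReal.ofReal |p.1 - x|) ^ (-γ) + (ENNReal.ofReal |p.1|) ^ (-γ)) *
          ((ENNReal.ofReal |p.2.1|) ^ (-t) * (ENNReal.ofReal |p.2.2|) ^ (-t)) := by
        apply lintegral_mono
        intro p
        have e1 := aux_prod p.1 p.2.1 p.2.2 s t β hs0 ht0 hst
        have e2 := aux_two |p.1 - x| |p.1| (1 - α) s (by linarith) hs0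
        rw [← hγ] at e2
        have e3 : -1 + α = -(1 - α) := by ring
        dsimp only
        rw [e3]
        refine (mul_le_mul_right e1 _).trans ?_
        rw [← mul_assoc]
        exact mul_le_mul_left e2 _
    _ = (∫⁻ u in I, ((ENNReal.ofReal |u - x|) ^ (-γ) + (ENNReal.ofReal |u|) ^ (-γ))) *
        ((∫⁻ u in I, (ENNReal.ofReal |u|) ^ (-t)) * ∫⁻ u in I, (ENNReal.ofReal |u|) ^ (-t)) := by
        rw [Measure.volume_eq_prod, Measure.volume_eq_prod, ← Measure.prod_restrict,
          ← Measure.prod_restrict,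
          ← lintegral_prod_mul (hmeas0 t).aemeasurable (hmeas0 t).aemeasurable,
          ← lintegral_prod_mul (by fun_prop) (by fun_prop)]
    _ ≤ _ := by
        rw [lintegral_add_left (hmeas x γ)]
        gcongr
        · exact aux_shift γ x hx
        · exact h0 γ
        · exact h0 t
        · exact h0 t
end
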